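/- arXiv:1202.6658 — 3 statements merged into one kernel-verified Lean document; each statement's English description precedes it below -/
import Mathlib

section
/- For every real α ≥ 0, the supremum of the set { d1 ∈ ℝ : 0 ≤ d1, d1 ≤ max(1, α), d1 ≤ min(1, max(α, 1 − α)), 2·d1 ≤ max(1, α) + max(0, 1 − α) } equals d_IC(α), where d_IC(α) = 1 − α if 0 ≤ α < 1/2; d_IC(α) = α if 1/2 ≤ α < 2/3; d_IC(α) = 1 − α/2 if 2/3 ≤ α < 1; d_IC(α) = α/2 if 1 ≤ α < 2; and d_IC(α) = 1 if α ≥ 2. (This is the maximum per-user generalized degrees of freedom of the symmetric Gaussian interference channel without a common message, i.e., with d0 = 0.) -/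
noncomputable section

/-- The per-user GDoF of the symmetric Gaussian interference channel without a
common message. -/
def dIC (α : ℝ) : ℝ :=
  if α < 1/2 then 1 - α
  else if α < 2/3 then α
  else if α < 1 then 1 - α/2
  else if α < 2 then α/2
  else 1

/-- The maximum per-user GDoF without a common message over the symmetric
Gaussian IC-CI equals d_IC(α). -/
theorem dIC_eq_sSup (α : ℝ) (hα : 0 ≤ α) :
    sSup { d1 : ℝ | 0 ≤ d1 ∧ d1 ≤ max 1 α ∧ d1 ≤ min 1 (max α (1 - α)) ∧
        2 * d1 ≤ max 1 α + max 0 (1 - α) } = dIC α := by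
  -- The set is a closed interval `[0, dIC α]`, so its supremum is its greatest element.
  apply IsGreatest.csSup_eq
  constructor
  · simp only [Set.mem_setOf_eq, le_min_iff, dIC]
    grind
  · rintro d ⟨-, -, h1, h2⟩
    rw [le_min_iff] at h1
    unfold dIC
    grind

end
end

section
/- For every real α ≥ 0, the supremum of the set { (d0 + 2·d1)/2 : d0 ≥ 0, d1 ≥ 0, d0 + d1 ≤ max(1, α), d1 ≤ min(1, max(α, 1 − α)), d0 + 2·d1 ≤ max(1, α) + max(0, 1 − α) } equals d_ICCI(α), where d_ICCI(α) = 1 − α/2 if 0 ≤ α < 1, and d_ICCI(α) = α/2 if α ≥ 1. Equivalently, d_ICCI(α) = d_IC(α) + α/2 on [0, 1/2), d_IC(α) + (2 − 3α)/2 on [1/2, 2/3), d_IC(α) on [2/3, 2), and d_IC(α) + (α − 2)/2 on [2, ∞), where d_IC(α) = 1 − α on [0, 1/2), α on [1/2, 2/3), 1 − α/2 on [2/3, 1), α/2 on [1, 2), and 1 on [2, ∞). (This is the maximum per-user generalized degrees of freedom of the symmetric Gaussian interference channel with a common message.) -/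
/-!
The bound `d0 + 2 * d1 ≤ max 1 α + max 0 (1 - α)` alone determines the supremum: half of its
right-hand side is `1 - α/2` for `α < 1` and `α/2` for `α ≥ 1`. It is attained at the feasible
points `(d0, d1) = (α, 1 - α)` and `(d0, d1) = (α, 0)` respectively, so the supremum is a maximum.
The piecewise formula for `dICCI` simplifies to the same two-case expression.
-/

noncomputable section

/-- The per-user GDoF of the symmetric Gaussian interference channel with a
common message. -/
def dICCI (α : ℝ) : ℝ :=
  if α < 1/2 then dIC α + α/2
  else if α < 2/3 then dIC α + (2 - 3*α)/2
  else if α < 1 then dIC α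
  else if α < 2 then dIC α
  else dIC α + (α - 2)/2

/-- The maximum per-user GDoF with the common message over the symmetric
Gaussian IC-CI equals d_ICCI(α), which is 1 − α/2 for α < 1 and α/2 for α ≥ 1. -/
theorem dICCI_eq_sSup (α : ℝ) (hα : 0 ≤ α) :
    sSup { x : ℝ | ∃ d0 d1 : ℝ, 0 ≤ d0 ∧ 0 ≤ d1 ∧ d0 + d1 ≤ max 1 α ∧
        d1 ≤ min 1 (max α (1 - α)) ∧ d0 + 2 * d1 ≤ max 1 α + max 0 (1 - α) ∧
        x = (d0 + 2 * d1) / 2 } = dICCI α ∧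
    dICCI α = (if α < 1 then 1 - α/2 else α/2) := by
  have hclosed : dICCI α = (if α < 1 then 1 - α/2 else α/2) := by
    unfold dICCI dIC
    split_ifs <;> linarith
  refine ⟨IsGreatest.csSup_eq ?_, hclosed⟩
  rw [hclosed]
  by_cases h : α < 1
  · rw [if_pos h, max_eq_left h.le, max_eq_right (by linarith : (0 : ℝ) ≤ 1 - α)]
    constructor
    · -- all of the cross-link level `α` goes to the common message
      exact ⟨α, 1 - α, hα, by linarith, by linarith,
        le_min (by linarith) (le_max_right _ _), by linarith, by ring⟩
    · rintro x ⟨d0, d1, -, -, -, -, hsum, rfl⟩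
      linarith
  · rw [not_lt] at h
    rw [if_neg h.not_gt, max_eq_right h, max_eq_left (by linarith : 1 - α ≤ (0 : ℝ))]
    constructor
    · -- only the common message is sent
      exact ⟨α, 0, hα, le_rfl, by linarith,
        le_min zero_le_one (hα.trans (le_max_left _ _)), by linarith, by ring⟩
    · rintro x ⟨d0, d1, -, -, -, -, hsum, rfl⟩
      linarith

end
end

section
/- For all real numbers a ≥ 0 and b ≥ 0, the function p ↦ log₂(1 + a·p/(1 + b·p)) is concave on the interval [0, ∞). -/
/-!
The inner function `p ↦ 1 + a p / (1 + b p)` is concave and positive on `[0, ∞)`: its Jensen gap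
at the weights `s + t = 1` is exactly
`a b s t (x - y)² / ((1 + b x) (1 + b y) (1 + b (s x + t y))) ≥ 0`.
Composing with `log`, which is increasing and concave on `(0, ∞)`, preserves concavity, and
`log₂` is `log` divided by the positive constant `log 2`.
-/

lemma rate_concave (a b : ℝ) (ha : 0 ≤ a) (hb : 0 ≤ b) {x y s t : ℝ} (hx : 0 ≤ x) (hy : 0 ≤ y)
    (hs : 0 ≤ s) (ht : 0 ≤ t) (hst : s + t = 1) :
    s * (1 + a * x / (1 + b * x)) + t * (1 + a * y / (1 + b * y))
      ≤ 1 + a * (s * x + t * y) / (1 + b * (s * x + t * y)) := by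
  have h1 : 0 < 1 + b * x := by positivity
  have h2 : 0 < 1 + b * y := by positivity
  have h3 : 0 < 1 + b * (s * x + t * y) := by positivity
  have gap : 1 + a * (s * x + t * y) / (1 + b * (s * x + t * y))
      - (s * (1 + a * x / (1 + b * x)) + t * (1 + a * y / (1 + b * y)))
      = a * b * s * t * (x - y) ^ 2
        / ((1 + b * x) * (1 + b * y) * (1 + b * (s * x + t * y))) := by
    obtain rfl : s = 1 - t := by linarith
    field_simp
    ring
  have : 0 ≤ a * b * s * t * (x - y) ^ 2
      / ((1 + b * x) * (1 + b * y) * (1 + b * (s * x + t * y))) := by positivity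
  linarith

/-- The function p ↦ log₂(1 + a·p/(1 + b·p)) is concave on [0, ∞), for a, b ≥ 0. -/
theorem concaveOn_logb_rate (a b : ℝ) (ha : 0 ≤ a) (hb : 0 ≤ b) :
    ConcaveOn ℝ (Set.Ici (0 : ℝ))
      (fun p : ℝ => Real.logb 2 (1 + a * p / (1 + b * p))) := by
  refine ⟨convex_Ici 0, fun x hx y hy s t hs ht hst => ?_⟩
  simp only [Set.mem_Ici] at hx hy
  have hfx : 0 < 1 + a * x / (1 + b * x) := by positivity
  have hfy : 0 < 1 + a * y / (1 + b * y) := by positivity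
  have hlog := strictConcaveOn_log_Ioi.concaveOn.2 (Set.mem_Ioi.2 hfx) (Set.mem_Ioi.2 hfy) hs ht hst
  simp only [smul_eq_mul] at hlog ⊢
  have hpos : 0 < s * (1 + a * x / (1 + b * x)) + t * (1 + a * y / (1 + b * y)) :=
    (convex_Ioi (0 : ℝ)) hfx hfy hs ht hst
  have hle := hlog.trans (Real.log_le_log hpos (rate_concave a b ha hb hx hy hs ht hst))
  have h2 : 0 < Real.log 2 := Real.log_pos one_lt_two
  simp only [Real.logb]
  rw [← mul_div_assoc, ← mul_div_assoc, ← add_div]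
  exact div_le_div_of_nonneg_right hle h2.le
end
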